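/- Let K be a local class of finite Σ-structures with Fraïssé limit R, and let μ_∞ be the frame-wise uniform measure on K^∞. Then μ_∞({S ∈ K^∞ : S ≅ R}) = 1; that is, under the frame-wise uniform measure almost every structure in K^∞ is isomorphic to the Fraïssé limit of K. -/

import Mathlib

open FirstOrder FirstOrder.Language

universe u v

/-- A finite structure for a relational signature `L`, with underlying set a finite subset of `ℕ`,
given by its relation interpretations (sets of tuples of natural numbers). -/
structure FinStruc (L : FirstOrder.Language.{u, v}) where
  carrier : Finset ℕ
  rel : ∀ ⦃n : ℕ⦄, L.Relations n → Set (Fin n → ℕ)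
  rel_mem : ∀ ⦃n : ℕ⦄ (R : L.Relations n) (t : Fin n → ℕ), t ∈ rel R → ∀ i, t i ∈ carrier

variable {L : FirstOrder.Language.{u, v}}

/-- The first-order structure on the underlying set of a `FinStruc`. -/
instance FinStruc.str [L.IsRelational] (A : FinStruc L) :
    L.Structure {x : ℕ // x ∈ A.carrier} where
  funMap := fun f _ => isEmptyElim f
  RelMap := fun {n} R t => (fun i => (t i : ℕ)) ∈ A.rel R

/-- Satisfaction of a sentence in a `FinStruc`. -/
def FinStruc.Sat [L.IsRelational] (A : FinStruc L) (φ : L.Sentence) : Prop :=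
  {x : ℕ // x ∈ A.carrier} ⊨ φ

/-- The General Irreflexivity axiom for a relation symbol `R` and coordinates `i`, `j`:
`∀ x₁ … xₙ, R (x₁, …, xₙ) → ¬ (xᵢ = xⱼ)`. -/
def giSentence {n : ℕ} (R : L.Relations n) (i j : Fin n) : L.Sentence :=
  BoundedFormula.alls
    ((Relations.boundedFormula R fun k => Term.var (Sum.inr k)).imp
      (Term.bdEqual (Term.var (Sum.inr i)) (Term.var (Sum.inr j))).not)

/-- The General Irreflexivity axiom schema `Φ^Σ_GI`. -/
def GITheory (L : FirstOrder.Language.{u, v}) : L.Theory :=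
  { φ | ∃ (n : ℕ) (R : L.Relations n) (i j : Fin n), i ≠ j ∧ φ = giSentence R i j }

/-- A sentence is local if it has the form `∀ x₁ … xₘ, R (x₁, …, xₘ) → ψ` with `m > 0` and
`ψ` quantifier-free. -/
def IsLocalSentence (φ : L.Sentence) : Prop :=
  ∃ m : ℕ, 0 < m ∧ ∃ (R : L.Relations m) (ψ : L.BoundedFormula Empty m), ψ.IsQF ∧
    φ = BoundedFormula.alls ((Relations.boundedFormula R fun k => Term.var (Sum.inr k)).imp ψ)

/-- A class of finite structures is local if it is the class of models of a set of local
sentences containing the General Irreflexivity axioms. -/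
def IsLocalClass [L.IsRelational] (K : Set (FinStruc L)) : Prop :=
  ∃ Φ : L.Theory, (∀ φ ∈ Φ, IsLocalSentence φ) ∧ GITheory L ⊆ Φ ∧
    K = { A : FinStruc L | ∀ φ ∈ Φ, A.Sat φ }

/-- The `n`-frame of a structure: same underlying set, same interpretations of relation symbols
of arity at most `n`, empty interpretation of all higher-arity relation symbols. -/
def FinStruc.frame (A : FinStruc L) (n : ℕ) : FinStruc L where
  carrier := A.carrier
  rel := fun m R => if m ≤ n then A.rel R else ∅
  rel_mem := by
    intro m R t ht i
    by_cases h : m ≤ n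
    · exact A.rel_mem R t (by simpa [h] using ht) i
    · simp [h] at ht

/-- The induced substructure of `B` on a finite set `X`. -/
def FinStruc.restrict (B : FinStruc L) (X : Finset ℕ) : FinStruc L where
  carrier := B.carrier ∩ X
  rel := fun _ R => { t | t ∈ B.rel R ∧ ∀ i, t i ∈ X }
  rel_mem := fun _ R t ht i => Finset.mem_inter.2 ⟨B.rel_mem R t ht.1 i, ht.2 i⟩

/-- `A` is the induced substructure of `B` on the subset `A.carrier` of `B.carrier`. -/
def FinStruc.IsInducedSub (A B : FinStruc L) : Prop :=
  A.carrier ⊆ B.carrier ∧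
    ∀ ⦃n : ℕ⦄ (R : L.Relations n) (t : Fin n → ℕ),
      (∀ i, t i ∈ A.carrier) → (t ∈ A.rel R ↔ t ∈ B.rel R)

/-- `A` is isomorphic to `B`: there is a bijection of the underlying sets preserving all
relations in both directions. -/
def FinStruc.IsIsoTo (A B : FinStruc L) : Prop :=
  ∃ f : ℕ → ℕ, Set.BijOn f ↑A.carrier ↑B.carrier ∧
    ∀ ⦃n : ℕ⦄ (R : L.Relations n) (t : Fin n → ℕ), (∀ i, t i ∈ A.carrier) →
      (t ∈ A.rel R ↔ (fun i => f (t i)) ∈ B.rel R)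

/-- The Adoptive Property. -/
def AdoptiveProperty (K : Set (FinStruc L)) : Prop :=
  ∀ (n : ℕ) (B A A' : FinStruc L), B ∈ K → A ∈ K → A' ∈ K →
    A.IsInducedSub B → A.carrier.card = n → A'.carrier = A.carrier →
    A'.frame (n - 1) = A.frame (n - 1) →
    ∃ B' ∈ K, B'.carrier = B.carrier ∧ B'.frame (n - 1) = B.frame (n - 1) ∧
      ∀ R : L.Relations n,
        B'.rel R = (B.rel R \ { t | ∀ i, t i ∈ A.carrier }) ∪ A'.rel R

/-- A structure for `L` with underlying set `ℕ`, given by its relation interpretations. -/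
structure InfStruc (L : FirstOrder.Language.{u, v}) where
  rel : ∀ ⦃n : ℕ⦄, L.Relations n → Set (Fin n → ℕ)

/-- The first-order structure on `ℕ` determined by an `InfStruc`. -/
def InfStruc.str [L.IsRelational] (M : InfStruc L) : L.Structure ℕ where
  funMap := fun f _ => isEmptyElim f
  RelMap := fun {n} R t => t ∈ M.rel R

/-- Satisfaction of a sentence in an `InfStruc`. -/
def InfStruc.Sat [L.IsRelational] (M : InfStruc L) (φ : L.Sentence) : Prop :=
  @FirstOrder.Language.Sentence.Realize L ℕ M.str φ

/-- The induced finite substructure of an `InfStruc` on a finite set `X`. -/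
def InfStruc.restrict (M : InfStruc L) (X : Finset ℕ) : FinStruc L where
  carrier := X
  rel := fun _ R => { t | t ∈ M.rel R ∧ ∀ i, t i ∈ X }
  rel_mem := fun _ _ _ ht i => ht.2 i

/-- The bundled structures isomorphic to a member of `K`. -/
def toBundled (L : FirstOrder.Language.{u, v}) [L.IsRelational] (K : Set (FinStruc L)) :
    Set (CategoryTheory.Bundled.{0} L.Structure) :=
  { M | ∃ A ∈ K, Nonempty (M ≃[L] {x : ℕ // x ∈ A.carrier}) }

/-- `K^{X,l}_{A,k}`: the set of `l`-frames of members `B` of `K` with underlying set `X` whose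
`k`-frame restricted to the underlying set of `A` is the `k`-frame of `A`. -/
def KsetFr (K : Set (FinStruc L)) (X : Finset ℕ) (l : ℕ) (A : FinStruc L) (k : ℕ) :
    Set (FinStruc L) :=
  { F | ∃ B ∈ K, B.carrier = X ∧ (B.frame k).restrict A.carrier = A.frame k ∧ F = B.frame l }

/-- `N(S,k)`: the number of distinct `(k+1)`-frames of members of `K` on the underlying set of `S`
whose `k`-frame is the `k`-frame of `S`. -/
noncomputable def Ncount (K : Set (FinStruc L)) (S : FinStruc L) (k : ℕ) : ℕ :=
  (KsetFr K S.carrier (k + 1) S k).ncard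

/-- The basic event `O_∞(A,k)`: structures on `ℕ` whose induced substructure on the underlying
set of `A` has `k`-frame equal to the `k`-frame of `A`. -/
def Oinf (A : FinStruc L) (k : ℕ) : Set (InfStruc L) :=
  { M | (M.restrict A.carrier).frame k = A.frame k }

/-- The σ-algebra on structures with underlying set `ℕ` generated by the basic frame events. -/
def frameEvents (L : FirstOrder.Language.{u, v}) : MeasurableSpace (InfStruc L) :=
  MeasurableSpace.generateFrom { s | ∃ (A : FinStruc L) (k : ℕ), s = Oinf A k }

/-- `K^∞`: the set of structures with underlying set `ℕ` satisfying all axioms in `Φ`. -/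
def KinfSet [L.IsRelational] (Φ : L.Theory) : Set (InfStruc L) :=
  { M | ∀ φ ∈ Φ, M.Sat φ }



section Model

theorem term_isVar [L.IsRelational] {m : ℕ} (t : L.Term (Empty ⊕ Fin m)) :
    ∃ i, t = Term.var (Sum.inr i) := by
  cases t with
  | var a =>
    rcases a with a | a
    · exact a.elim
    · exact ⟨a, rfl⟩
  | func f _ => exact isEmptyElim f

theorem qf_transfer [L.IsRelational] {α β : Type*} [L.Structure α] [L.Structure β] {m : ℕ}
    (xs : Fin m → α) (ys : Fin m → β) (heq : ∀ i j, xs i = xs j ↔ ys i = ys j)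
    (hrel : ∀ n (R : L.Relations n) (s : Fin n → Fin m),
      Structure.RelMap R (fun i => xs (s i)) ↔ Structure.RelMap R (fun i => ys (s i)))
    (ψ : L.BoundedFormula Empty m) (hψ : ψ.IsQF) :
    ψ.Realize default xs ↔ ψ.Realize default ys := by
  induction hψ with
  | falsum => simp [BoundedFormula.Realize]
  | of_isAtomic h =>
    cases h with
    | equal t₁ t₂ =>
      obtain ⟨i, rfl⟩ := term_isVar t₁
      obtain ⟨j, rfl⟩ := term_isVar t₂
      simp [heq]
    | rel R ts =>
      choose s hs using fun i => term_isVar (ts i)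
      have : ts = fun i => Term.var (Sum.inr (s i)) := funext hs
      subst this
      simpa [BoundedFormula.realize_rel] using hrel _ R s
  | imp _ _ h₁ h₂ => simp [h₁, h₂]

theorem local_realize {α : Type*} [L.Structure α] {m : ℕ} (R : L.Relations m)
    (ψ : L.BoundedFormula Empty m) :
    Sentence.Realize α (BoundedFormula.alls
      ((Relations.boundedFormula R fun k => Term.var (Sum.inr k)).imp ψ)) ↔
      ∀ xs : Fin m → α, Structure.RelMap R xs → ψ.Realize default xs := by
  unfold Sentence.Realize Formula.Realize
  refine BoundedFormula.realize_alls.trans ?_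
  simp [BoundedFormula.realize_rel]

/-- Two tuples have the same quantifier-free type. -/
def SameType {α β : Type*} [L.Structure α] [L.Structure β] {m : ℕ}
    (xs : Fin m → α) (ys : Fin m → β) : Prop :=
  (∀ i j, xs i = xs j ↔ ys i = ys j) ∧ ∀ n (R : L.Relations n) (s : Fin n → Fin m),
      Structure.RelMap R (fun i => xs (s i)) ↔ Structure.RelMap R (fun i => ys (s i))

theorem sat_transfer [L.IsRelational] {α : Type} [L.Structure α] (φ : L.Sentence)
    (hφ : IsLocalSentence φ)
    (h : ∀ m, 0 < m → ∀ (R : L.Relations m) (xs : Fin m → α), Structure.RelMap R xs →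
      ∃ (β : Type) (S : L.Structure β), Sentence.Realize β φ ∧
        ∃ ys : Fin m → β, SameType (L := L) xs ys) : Sentence.Realize α φ := by
  obtain ⟨m, hm, R, ψ, hψ, rfl⟩ := hφ
  rw [local_realize]
  intro xs hxs
  obtain ⟨β, S, hβ, ys, hys⟩ := h m hm R xs hxs
  rw [local_realize] at hβ
  rw [qf_transfer xs ys hys.1 hys.2 ψ hψ]
  exact hβ ys ((hys.2 m R id).1 hxs)

/-- Atoms: a relation symbol with a tuple of natural numbers. -/
abbrev Atom (L : FirstOrder.Language.{u, v}) : Type v := Σ n : ℕ, L.Relations n × (Fin n → ℕ)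

/-- The support of an atom. -/
def supp (a : Atom L) : Finset ℕ := Finset.univ.image a.2.2

/-- The structure with a given set of atoms. -/
def mkS (s : Set (Atom L)) : InfStruc L := ⟨fun n R => {t | (⟨n, R, t⟩ : Atom L) ∈ s}⟩

/-- The set of atoms of a structure. -/
def atoms (M : InfStruc L) : Set (Atom L) := {a | a.2.2 ∈ M.rel a.2.1}

/-- The sets of atoms of models. -/
def AK [L.IsRelational] (Φ : L.Theory) : Set (Set (Atom L)) := {s | mkS s ∈ KinfSet Φ}

/-- Agreement of sets of atoms on a set `X`. -/
def AgreeOn (X : Finset ℕ) (s s' : Set (Atom L)) : Prop := ∀ b, supp b ⊆ X → (b ∈ s ↔ b ∈ s')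

/-- Permutation of an atom. -/
def permA (σ : Equiv.Perm ℕ) (a : Atom L) : Atom L := ⟨a.1, a.2.1, fun i => σ (a.2.2 i)⟩

theorem mem_supp (a : Atom L) (x : ℕ) : x ∈ supp a ↔ ∃ i, a.2.2 i = x := by simp [supp]

theorem supp_permA (σ : Equiv.Perm ℕ) (a : Atom L) : supp (permA σ a) = (supp a).image σ := by
  ext x; simp [mem_supp, permA]

theorem permA_permA (σ τ : Equiv.Perm ℕ) (a : Atom L) : permA σ (permA τ a) = permA (σ * τ) a := rfl

theorem permA_one (a : Atom L) : permA 1 a = a := rfl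

theorem supp_subset (a : Atom L) (X : Finset ℕ) : supp a ⊆ X ↔ ∀ i, a.2.2 i ∈ X := by
  simp [supp, Finset.image_subset_iff]

theorem glue [L.IsRelational] (Φ : L.Theory) (hloc : ∀ φ ∈ Φ, IsLocalSentence φ)
    (s : Set (Atom L)) (h : ∀ a ∈ s, ∃ s' ∈ AK Φ, AgreeOn (supp a) s s') : s ∈ AK Φ := by
  intro φ hφ
  let := (mkS s).str
  refine sat_transfer (α := ℕ) φ (hloc φ hφ) fun m _ R xs hxs => ?_
  obtain ⟨s', hs', hag⟩ := h ⟨m, R, xs⟩ hxs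
  refine ⟨ℕ, (mkS s').str, hs' φ hφ, xs, fun _ _ => Iff.rfl, fun n R' t => ?_⟩
  refine hag ⟨n, R', fun i => xs (t i)⟩ ?_
  rw [supp_subset]
  intro i
  simp [mem_supp]

theorem perm_mem [L.IsRelational] (Φ : L.Theory) (hloc : ∀ φ ∈ Φ, IsLocalSentence φ)
    (s : Set (Atom L)) (hs : s ∈ AK Φ) (σ : Equiv.Perm ℕ) : {a | permA σ a ∈ s} ∈ AK Φ := by
  intro φ hφ
  let := (mkS {a | permA σ a ∈ s}).str
  refine sat_transfer (α := ℕ) φ (hloc φ hφ) fun m _ R xs hxs => ?_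
  exact ⟨ℕ, (mkS s).str, hs φ hφ, fun i => σ (xs i), fun _ _ => by simp, fun n R' t => Iff.rfl⟩

theorem inj_of_mem [L.IsRelational] (Φ : L.Theory) (hGI : GITheory L ⊆ Φ)
    (s : Set (Atom L)) (hs : s ∈ AK Φ) (a : Atom L) (ha : a ∈ s) : (supp a).card = a.1 := by
  obtain ⟨n, R, t⟩ := a
  have : Function.Injective t := by
    intro i j hij
    by_contra hne
    have h := hs (giSentence R i j) (hGI ⟨n, R, i, j, hne, rfl⟩)
    let := (mkS s).str
    have h2 := (local_realize (α := ℕ) R _).1 h t ha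
    simp [hij] at h2
  simp [supp, Finset.card_image_of_injective _ this]

theorem restrict_mem_K [L.IsRelational] (Φ : L.Theory) (hloc : ∀ φ ∈ Φ, IsLocalSentence φ)
    (M : InfStruc L) (hM : M ∈ KinfSet Φ) (X : Finset ℕ) : ∀ φ ∈ Φ, (M.restrict X).Sat φ := by
  intro φ hφ
  refine sat_transfer (α := {x : ℕ // x ∈ (M.restrict X).carrier}) φ (hloc φ hφ) fun m _ R xs hxs => ?_
  refine ⟨ℕ, M.str, hM φ hφ, fun i => xs i, fun _ _ => Subtype.ext_iff, fun n R' t => ?_⟩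
  show (_ ∧ _) ↔ _
  refine ⟨fun h => h.1, fun h => ⟨h, fun i => (xs (t i)).2⟩⟩

theorem mem_Kinf_of_K [L.IsRelational] (Φ : L.Theory) (hloc : ∀ φ ∈ Φ, IsLocalSentence φ)
    (A : FinStruc L) (hA : ∀ φ ∈ Φ, A.Sat φ) : (⟨A.rel⟩ : InfStruc L) ∈ KinfSet Φ := by
  intro φ hφ
  let := (⟨A.rel⟩ : InfStruc L).str
  refine sat_transfer (α := ℕ) φ (hloc φ hφ) fun m _ R xs hxs => ?_
  refine ⟨{x : ℕ // x ∈ A.carrier}, A.str, hA φ hφ, fun i => ⟨xs i, A.rel_mem R xs hxs i⟩,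
    fun _ _ => by simp, fun n R' t => Iff.rfl⟩

end Model

section Comb

/-- The abstract properties of the class of models. -/
structure Nice (𝒦 : Set (Set (Atom L))) : Prop where
  glue : ∀ s : Set (Atom L), (∀ a ∈ s, ∃ s' ∈ 𝒦, AgreeOn (supp a) s s') → s ∈ 𝒦
  perm : ∀ s ∈ 𝒦, ∀ σ : Equiv.Perm ℕ, {a | permA σ a ∈ s} ∈ 𝒦
  card : ∀ s ∈ 𝒦, ∀ a ∈ s, (supp a).card = a.1

/-- Agreement on atoms with support exactly `Y`. -/
def AgreeAt (Y : Finset ℕ) (s s' : Set (Atom L)) : Prop := ∀ b, supp b = Y → (b ∈ s ↔ b ∈ s')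

/-- Possible choices of the atoms with support `Y`. -/
def Choices (𝒦 : Set (Set (Atom L))) (s0 : Set (Atom L)) (Y : Finset ℕ) : Set (Set (Atom L)) :=
  {c | ∃ s ∈ 𝒦, (∀ Z, Z ⊂ Y → AgreeAt Z s s0) ∧ c = {a | a ∈ s ∧ supp a = Y}}

/-- The event of agreeing with `s0` at all members of `𝒴`. -/
def Ev (𝒦 : Set (Set (Atom L))) (𝒴 : Finset (Finset ℕ)) (s0 : Set (Atom L)) :
    Set (Set (Atom L)) := {s | s ∈ 𝒦 ∧ ∀ Y ∈ 𝒴, AgreeAt Y s s0}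

/-- Atoms with support `Y` and matching arity. -/
def topAtoms (L : FirstOrder.Language.{u, v}) (Y : Finset ℕ) : Set (Atom L) :=
  {a | a.1 = Y.card ∧ supp a = Y}

/-- Modification of `s0` by a choice. -/
def modS (𝒴 : Finset (Finset ℕ)) (s0 c : Set (Atom L)) : Set (Atom L) :=
  {a | (a ∈ s0 ∧ supp a ∈ 𝒴) ∨ a ∈ c}

theorem topAtoms_card [∀ n, Finite (L.Relations n)] (Y : Finset ℕ) : (topAtoms L Y).Finite ∧
    (topAtoms L Y).ncard ≤ Nat.card (L.Relations Y.card) * Y.card ^ Y.card := by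
  let g : L.Relations Y.card × (Fin Y.card → Y) → Atom L := fun p => ⟨Y.card, p.1, fun i => p.2 i⟩
  have hsub : topAtoms L Y ⊆ Set.range g := by
    rintro ⟨n, R, t⟩ ⟨h1, h2⟩
    dsimp at h1
    subst h1
    have : ∀ i, t i ∈ Y := by
      intro i; rw [← h2]; exact (mem_supp _ _).2 ⟨i, rfl⟩
    exact ⟨(R, fun i => ⟨t i, this i⟩), rfl⟩
  have hfin : (Set.range g).Finite := Set.finite_range g
  refine ⟨hfin.subset hsub, (Set.ncard_le_ncard hsub hfin).trans ?_⟩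
  have := Finite.card_range_le g
  rw [Nat.card_coe_set_eq] at this
  refine this.trans ?_
  rw [Nat.card_prod, Nat.card_fun]
  simp

variable {𝒦 : Set (Set (Atom L))}

theorem choices_sub (hN : Nice 𝒦) (s0 : Set (Atom L)) (Y : Finset ℕ) :
    Choices 𝒦 s0 Y ⊆ (topAtoms L Y).powerset := by
  rintro c ⟨s, hs, _, rfl⟩ a ⟨ha, hY⟩
  exact ⟨by rw [← hN.card s hs a ha, hY], hY⟩

theorem choices_finite [∀ n, Finite (L.Relations n)] (hN : Nice 𝒦) (s0 : Set (Atom L))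
    (Y : Finset ℕ) : (Choices 𝒦 s0 Y).Finite :=
  (topAtoms_card Y).1.finite_subsets.subset (choices_sub hN s0 Y)

theorem choices_le [∀ n, Finite (L.Relations n)] (hN : Nice 𝒦) (s0 : Set (Atom L))
    (Y : Finset ℕ) : (Choices 𝒦 s0 Y).ncard ≤
      2 ^ (Nat.card (L.Relations Y.card) * Y.card ^ Y.card) := by
  refine (Set.ncard_le_ncard (choices_sub hN s0 Y) (topAtoms_card Y).1.finite_subsets).trans ?_
  rw [Set.ncard_powerset _ (topAtoms_card Y).1]
  exact Nat.pow_le_pow_right (by norm_num) (topAtoms_card Y).2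

theorem choices_ne [∀ n, Finite (L.Relations n)] (hN : Nice 𝒦) (s0 : Set (Atom L)) (hs : s0 ∈ 𝒦)
    (Y : Finset ℕ) : (Choices 𝒦 s0 Y).ncard ≠ 0 := by
  have hm : {a | a ∈ s0 ∧ supp a = Y} ∈ Choices 𝒦 s0 Y :=
    ⟨s0, hs, fun _ _ _ _ => Iff.rfl, rfl⟩
  exact Set.ncard_ne_zero_of_mem hm (choices_finite hN s0 Y)

theorem choices_congr (s0 s1 : Set (Atom L)) (Y : Finset ℕ)
    (h : ∀ Z, Z ⊂ Y → AgreeAt Z s0 s1) : Choices 𝒦 s0 Y = Choices 𝒦 s1 Y := by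
  ext c
  constructor
  · rintro ⟨s, hs, h1, rfl⟩
    exact ⟨s, hs, fun Z hZ b hb => (h1 Z hZ b hb).trans (h Z hZ b hb), rfl⟩
  · rintro ⟨s, hs, h1, rfl⟩
    exact ⟨s, hs, fun Z hZ b hb => (h1 Z hZ b hb).trans (h Z hZ b hb).symm, rfl⟩

theorem choices_supp {s0 : Set (Atom L)} {Y : Finset ℕ} {c : Set (Atom L)}
    (hc : c ∈ Choices 𝒦 s0 Y) {a : Atom L} (ha : a ∈ c) : supp a = Y := by
  obtain ⟨s, _, _, rfl⟩ := hc
  exact ha.2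

theorem mod_mem (hN : Nice 𝒦) {𝒴 : Finset (Finset ℕ)} (hd : ∀ Y ∈ 𝒴, ∀ Z, Z ⊆ Y → Z ∈ 𝒴)
    {Y : Finset ℕ} (hY : Y ∉ 𝒴) (hmin : ∀ Z, Z ⊂ Y → Z ∈ 𝒴) {s0 : Set (Atom L)} (hs0 : s0 ∈ 𝒦)
    {c : Set (Atom L)} (hc : c ∈ Choices 𝒦 s0 Y) : modS 𝒴 s0 c ∈ 𝒦 := by
  have hc' := hc
  obtain ⟨s, hs, hag, rfl⟩ := hc
  apply hN.glue
  rintro a (⟨ha, ha'⟩ | ha)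
  · refine ⟨s0, hs0, fun b hb => ?_⟩
    have hb' := hd _ ha' _ hb
    constructor
    · rintro (h | h)
      · exact h.1
      · rw [choices_supp hc' h] at hb'
        exact (hY hb').elim
    · intro h
      exact Or.inl ⟨h, hb'⟩
  · refine ⟨s, hs, fun b hb => ?_⟩
    rw [ha.2] at hb
    rcases hb.eq_or_ssubset with hb | hb
    · constructor
      · rintro (h | h)
        · rw [hb] at h; exact (hY h.2).elim
        · exact h.1
      · intro h
        exact Or.inr ⟨h, hb⟩
    · constructor
      · rintro (h | h)
        · exact (hag _ hb b rfl).2 h.1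
        · exact h.1
      · intro h
        exact Or.inl ⟨(hag _ hb b rfl).1 h, hmin _ hb⟩

theorem mod_agree {𝒴 : Finset (Finset ℕ)} {Y : Finset ℕ} (hY : Y ∉ 𝒴) {s0 : Set (Atom L)}
    {c : Set (Atom L)} (hc : c ∈ Choices 𝒦 s0 Y) : ∀ Z ∈ 𝒴, AgreeAt Z (modS 𝒴 s0 c) s0 := by
  rintro Z hZ b rfl
  constructor
  · rintro (h | h)
    · exact h.1
    · rw [choices_supp hc h] at hZ
      exact (hY hZ).elim
  · intro h
    exact Or.inl ⟨h, hZ⟩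

theorem Ev_decomp {𝒴 : Finset (Finset ℕ)}
    {Y : Finset ℕ} (hY : Y ∉ 𝒴) (hmin : ∀ Z, Z ⊂ Y → Z ∈ 𝒴) (s0 : Set (Atom L)) :
    Ev 𝒦 𝒴 s0 = ⋃ c ∈ Choices 𝒦 s0 Y, Ev 𝒦 (insert Y 𝒴) (modS 𝒴 s0 c) := by
  ext s
  simp only [Set.mem_iUnion]
  constructor
  · rintro ⟨hs, h⟩
    have hc : {a | a ∈ s ∧ supp a = Y} ∈ Choices 𝒦 s0 Y := ⟨s, hs, fun Z hZ => h Z (hmin Z hZ), rfl⟩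
    refine ⟨_, hc, hs, ?_⟩
    intro Z hZ b hb
    rcases Finset.mem_insert.1 hZ with rfl | hZ
    · constructor
      · intro h'; exact Or.inr ⟨h', hb⟩
      · rintro (h' | h')
        · rw [hb] at h'; exact (hY h'.2).elim
        · exact h'.1
    · exact (h Z hZ b hb).trans (mod_agree hY hc Z hZ b hb).symm
  · rintro ⟨c, hc, hs, h⟩
    exact ⟨hs, fun Z hZ b hb => (h Z (Finset.mem_insert_of_mem hZ) b hb).trans
      (mod_agree hY hc Z hZ b hb)⟩

theorem Ev_disj {𝒴 : Finset (Finset ℕ)} {Y : Finset ℕ} (hY : Y ∉ 𝒴) (s0 : Set (Atom L)) :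
    (Choices 𝒦 s0 Y).PairwiseDisjoint fun c => Ev 𝒦 (insert Y 𝒴) (modS 𝒴 s0 c) := by
  have key : ∀ c ∈ Choices 𝒦 s0 Y, ∀ s ∈ Ev 𝒦 (insert Y 𝒴) (modS 𝒴 s0 c),
      c = {a | a ∈ s ∧ supp a = Y} := by
    intro c hc s hs
    ext a
    constructor
    · intro ha
      have hY' := choices_supp hc ha
      exact ⟨(hs.2 Y (Finset.mem_insert_self _ _) a hY').2 (Or.inr ha), hY'⟩
    · rintro ⟨ha, hY'⟩
      rcases (hs.2 Y (Finset.mem_insert_self _ _) a hY').1 ha with h | h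
      · rw [hY'] at h; exact (hY h.2).elim
      · exact h
  intro c hc c' hc' hne
  refine Set.disjoint_left.2 fun s hs hs' => hne ?_
  rw [key c hc s hs, key c' hc' s hs']

end Comb

section Prob

open MeasureTheory

variable {𝒦 : Set (Set (Atom L))}

theorem measurable_Ev [∀ n, Finite (L.Relations n)] (hm : MeasurableSet 𝒦)
    (𝒴 : Finset (Finset ℕ)) (s0 : Set (Atom L)) : MeasurableSet (Ev 𝒦 𝒴 s0) := by
  have : ∀ n, Countable (L.Relations n) := fun n => inferInstance
  have h1 : Ev 𝒦 𝒴 s0 = 𝒦 ∩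
      ⋂ Y ∈ 𝒴, ⋂ b : Atom L, ⋂ _ : supp b = Y, {s | b ∈ s ↔ b ∈ s0} := by
    ext s; simp [AgreeAt, Ev]
  rw [h1]
  refine hm.inter (MeasurableSet.iInter fun Y => ?_)
  refine MeasurableSet.iInter fun _ => MeasurableSet.iInter fun b => MeasurableSet.iInter fun _ => ?_
  have hb : MeasurableSet {s : Set (Atom L) | b ∈ s} := measurableSet_setOfPred.2 (measurable_set_mem b)
  by_cases h : b ∈ s0
  · simpa [h] using hb
  · have h2 : {s : Set (Atom L) | b ∈ s ↔ b ∈ s0} = {s : Set (Atom L) | b ∈ s}ᶜ := by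
      ext s; simp [h]
    rw [h2]; exact hb.compl

theorem measure_Ev [∀ n, Finite (L.Relations n)] (hN : Nice 𝒦) (hm : MeasurableSet 𝒦)
    (ν : Measure (Set (Atom L)))
    (hbase : ∀ X : Finset ℕ, ∀ s0 ∈ 𝒦, ν (Ev 𝒦 X.powerset s0) =
      ∏ Y ∈ X.powerset, ((Choices 𝒦 s0 Y).ncard : ENNReal)⁻¹)
    (X : Finset ℕ) (n : ℕ) : ∀ 𝒴 ⊆ X.powerset, (∀ Y ∈ 𝒴, ∀ Z, Z ⊆ Y → Z ∈ 𝒴) →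
      (X.powerset \ 𝒴).card = n → ∀ s0 ∈ 𝒦, ν (Ev 𝒦 𝒴 s0) =
      ∏ Y ∈ 𝒴, ((Choices 𝒦 s0 Y).ncard : ENNReal)⁻¹ := by
  induction n with
  | zero =>
    intro 𝒴 h1 h2 h3 s0 hs0
    have : 𝒴 = X.powerset := by
      apply h1.antisymm
      rwa [Finset.card_eq_zero, Finset.sdiff_eq_empty_iff_subset] at h3
    rw [this]
    exact hbase X s0 hs0
  | succ n ih =>
    intro 𝒴 h1 hd h3 s0 hs0
    have hne : (X.powerset \ 𝒴).Nonempty := by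
      rw [← Finset.card_pos]; omega
    obtain ⟨Y, hYm⟩ := Finset.exists_minimal hne
    have hYX := Finset.mem_sdiff.1 hYm.1
    have hY := hYX.2
    have hmin : ∀ Z, Z ⊂ Y → Z ∈ 𝒴 := by
      intro Z hZ
      by_contra hZ'
      have : Z ∈ X.powerset \ 𝒴 := Finset.mem_sdiff.2
        ⟨Finset.mem_powerset.2 (hZ.1.trans (Finset.mem_powerset.1 hYX.1)), hZ'⟩
      exact hZ.2 (hYm.2 this hZ.1)
    have hd' : ∀ W ∈ insert Y 𝒴, ∀ Z, Z ⊆ W → Z ∈ insert Y 𝒴 := by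
      intro W hW Z hZ
      rcases Finset.mem_insert.1 hW with rfl | hW
      · rcases hZ.eq_or_ssubset with rfl | h
        · exact hW
        · exact Finset.mem_insert_of_mem (hmin Z h)
      · exact Finset.mem_insert_of_mem (hd W hW Z hZ)
    have hcard : (X.powerset \ insert Y 𝒴).card = n := by
      rw [Finset.sdiff_insert, Finset.card_erase_of_mem hYm.1, h3]; rfl
    have hsub : insert Y 𝒴 ⊆ X.powerset := Finset.insert_subset hYX.1 h1
    rw [Ev_decomp hY hmin s0, measure_biUnion (choices_finite hN s0 Y).countable (Ev_disj hY s0)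
      fun c _ => measurable_Ev hm _ _]
    have hval : ∀ c : Choices 𝒦 s0 Y, ν (Ev 𝒦 (insert Y 𝒴) (modS 𝒴 s0 c)) =
        ((Choices 𝒦 s0 Y).ncard : ENNReal)⁻¹ *
          ∏ Y ∈ 𝒴, ((Choices 𝒦 s0 Y).ncard : ENNReal)⁻¹ := by
      rintro ⟨c, hc⟩
      rw [ih _ hsub hd' hcard _ (mod_mem hN hd hY hmin hs0 hc), Finset.prod_insert hY]
      have hag := mod_agree hY hc
      congr 1
      · rw [choices_congr _ s0 Y fun Z hZ => hag Z (hmin Z hZ)]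
      · refine Finset.prod_congr rfl fun W hW => ?_
        rw [choices_congr _ s0 W fun Z hZ => hag Z (hd W hW Z hZ.1)]
    simp only [hval]
    rw [ENNReal.tsum_const, ← mul_assoc, ENat.card_coe_set_eq,
      ← (choices_finite hN s0 Y).cast_ncard_eq]
    have : ((Choices 𝒦 s0 Y).ncard : ENNReal) ≠ 0 := by
      exact_mod_cast choices_ne hN s0 hs0 Y
    simp only [ENat.toENNReal_coe]
    rw [ENNReal.mul_inv_cancel this (by simp), one_mul]

end Prob

section Ext

open MeasureTheory

variable {𝒦 : Set (Set (Atom L))}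

theorem Ev_powerset (X : Finset ℕ) (s0 : Set (Atom L)) :
    Ev 𝒦 X.powerset s0 = {s | s ∈ 𝒦 ∧ AgreeOn X s s0} := by
  ext s
  refine and_congr_right fun _ => ⟨fun h b hb => h _ (Finset.mem_powerset.2 hb) b rfl, ?_⟩
  rintro h Y hY b rfl
  exact h b (Finset.mem_powerset.1 hY)

/-- Restriction of a set of atoms. -/
def resS (X : Finset ℕ) (s : Set (Atom L)) : Set (Atom L) := {a | a ∈ s ∧ supp a ⊆ X}

theorem resS_agree (X : Finset ℕ) (s : Set (Atom L)) : AgreeOn X (resS X s) s :=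
  fun _ hb => ⟨fun h => h.1, fun h => ⟨h, hb⟩⟩

theorem resS_mem (hN : Nice 𝒦) (X : Finset ℕ) (s : Set (Atom L)) (hs : s ∈ 𝒦) : resS X s ∈ 𝒦 := by
  apply hN.glue
  intro a ha
  exact ⟨s, hs, fun b hb => resS_agree X s b (hb.trans ha.2)⟩

/-- Members of the class supported in `X`. -/
def Pat (𝒦 : Set (Set (Atom L))) (X : Finset ℕ) : Set (Set (Atom L)) :=
  {s | s ∈ 𝒦 ∧ ∀ a ∈ s, supp a ⊆ X}

theorem Pat_countable [∀ n, Finite (L.Relations n)] (hN : Nice 𝒦) (X : Finset ℕ) :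
    (Pat 𝒦 X).Countable := by
  have : ∀ n, Countable (L.Relations n) := fun n => inferInstance
  have hfin : (⋃ Y ∈ X.powerset, topAtoms L Y).Finite :=
    Set.Finite.biUnion X.powerset.finite_toSet fun Y _ => (topAtoms_card Y).1
  refine (hfin.finite_subsets.subset ?_).countable
  intro s hs a ha
  simp only [Set.mem_iUnion]
  exact ⟨supp a, Finset.mem_powerset.2 (hs.2 a ha), (hN.card s hs.1 a ha).symm, rfl⟩

/-- The constant bounding the conditional probabilities from below. -/
noncomputable def bnd (L : FirstOrder.Language.{u, v}) (k : ℕ) : ℕ :=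
  2 ^ (∑ n ∈ Finset.range (k + 1), Nat.card (L.Relations n) * n ^ n)

theorem cond_bound [∀ n, Finite (L.Relations n)] (hN : Nice 𝒦)
    (ν : Measure (Set (Atom L)))
    (hEv : ∀ X : Finset ℕ, ∀ 𝒴 ⊆ X.powerset, (∀ Y ∈ 𝒴, ∀ Z, Z ⊆ Y → Z ∈ 𝒴) →
      ∀ s0 ∈ 𝒦, ν (Ev 𝒦 𝒴 s0) = ∏ Y ∈ 𝒴, ((Choices 𝒦 s0 Y).ncard : ENNReal)⁻¹)
    (X F : Finset ℕ) (x : ℕ) (hx : x ∉ X) (s0 B : Set (Atom L)) (hs0 : s0 ∈ 𝒦)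
    (hB : B ∈ 𝒦) (hag : AgreeOn F s0 B) :
    (((bnd L (F.card + 1) : ENNReal))⁻¹ ^ (2 ^ (F.card + 1))) * ν (Ev 𝒦 X.powerset s0) ≤
      ν (Ev 𝒦 X.powerset s0 ∩ {s | AgreeOn (insert x F) s B}) := by
  set G := insert x F with hG
  have hXG : ∀ Y, Y ⊆ X → Y ⊆ G → Y ⊆ F := by
    intro Y h1 h2 y hy
    rcases Finset.mem_insert.1 (h2 hy) with rfl | h
    · exact (hx (h1 hy)).elim
    · exact h
  let s1 : Set (Atom L) := {a | (a ∈ s0 ∧ supp a ⊆ X) ∨ (a ∈ B ∧ supp a ⊆ G)}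
  have hag1 : AgreeOn X s1 s0 := by
    intro b hb
    constructor
    · rintro (h | h)
      · exact h.1
      · exact (hag b (hXG _ hb h.2)).2 h.1
    · intro h; exact Or.inl ⟨h, hb⟩
  have hag2 : AgreeOn G s1 B := by
    intro b hb
    constructor
    · rintro (h | h)
      · exact (hag b (hXG _ h.2 hb)).1 h.1
      · exact h.1
    · intro h; exact Or.inr ⟨h, hb⟩
  have hs1 : s1 ∈ 𝒦 := by
    apply hN.glue
    rintro a (h | h)
    · exact ⟨s0, hs0, fun b hb => hag1 b (hb.trans h.2)⟩
    · exact ⟨B, hB, fun b hb => hag2 b (hb.trans h.2)⟩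
  have hset : Ev 𝒦 X.powerset s0 ∩ {s | AgreeOn G s B} =
      Ev 𝒦 (X.powerset ∪ (G.powerset \ X.powerset)) s1 := by
    rw [Ev_powerset]
    ext s
    constructor
    · rintro ⟨⟨h1, h2⟩, h3⟩
      refine ⟨h1, ?_⟩
      rintro Y hY b rfl
      simp only [Finset.union_sdiff_self_eq_union, Finset.mem_union, Finset.mem_powerset] at hY
      rcases hY with hY | hY
      · exact (h2 b hY).trans (hag1 b hY).symm
      · exact (h3 b hY).trans (hag2 b hY).symm
    · rintro ⟨h1, h2⟩
      refine ⟨⟨h1, fun b hb => ?_⟩, fun b hb => ?_⟩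
      · exact (h2 (supp b) (by simp [hb]) b rfl).trans (hag1 b hb)
      · exact (h2 (supp b) (by simp [hb]) b rfl).trans (hag2 b hb)
  have hset2 : Ev 𝒦 X.powerset s0 = Ev 𝒦 X.powerset s1 := by
    rw [Ev_powerset, Ev_powerset]
    ext s
    exact and_congr_right fun _ => ⟨fun h b hb => (h b hb).trans (hag1 b hb).symm,
      fun h b hb => (h b hb).trans (hag1 b hb)⟩
  rw [hset, hset2, hEv X X.powerset subset_rfl ?_ s1 hs1, hEv (X ∪ G) _ ?_ ?_ s1 hs1,
    Finset.prod_union Finset.disjoint_sdiff, mul_comm]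
  · gcongr
    have hGc : G.card ≤ F.card + 1 := Finset.card_insert_le _ _
    have h1 : ((bnd L (F.card + 1) : ENNReal))⁻¹ ^ (G.powerset \ X.powerset).card ≤
        ∏ Y ∈ G.powerset \ X.powerset, ((Choices 𝒦 s1 Y).ncard : ENNReal)⁻¹ := by
      rw [← Finset.prod_const]
      refine Finset.prod_le_prod' fun Y hY => ?_
      rw [ENNReal.inv_le_inv]
      have hYc : Y.card ≤ F.card + 1 :=
        (Finset.card_le_card (Finset.mem_powerset.1 (Finset.mem_sdiff.1 hY).1)).trans hGc
      have := choices_le hN s1 Y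
      have h2 : Nat.card (L.Relations Y.card) * Y.card ^ Y.card ≤
          ∑ n ∈ Finset.range (F.card + 1 + 1), Nat.card (L.Relations n) * n ^ n :=
        Finset.single_le_sum (f := fun n => Nat.card (L.Relations n) * n ^ n)
          (fun _ _ => Nat.zero_le _) (Finset.mem_range.2 (by omega))
      exact_mod_cast this.trans (Nat.pow_le_pow_right (by norm_num) h2)
    refine le_trans ?_ h1
    refine pow_le_pow_right_of_le_one' ?_ ?_
    · rw [ENNReal.inv_le_one]
      exact_mod_cast Nat.one_le_two_pow
    · refine (Finset.card_le_card Finset.sdiff_subset).trans ?_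
      rw [Finset.card_powerset]
      exact Nat.pow_le_pow_right (by norm_num) hGc
  · intro Y hY
    simp only [Finset.union_sdiff_self_eq_union, Finset.mem_union, Finset.mem_powerset] at hY ⊢
    rcases hY with hY | hY
    · exact hY.trans Finset.subset_union_left
    · exact hY.trans Finset.subset_union_right
  · intro Y hY Z hZ
    simp only [Finset.union_sdiff_self_eq_union, Finset.mem_union, Finset.mem_powerset] at hY ⊢
    exact hY.imp hZ.trans hZ.trans
  · intro Y hY Z hZ
    exact Finset.mem_powerset.2 (hZ.trans (Finset.mem_powerset.1 hY))

theorem measurable_agree [∀ n, Finite (L.Relations n)] (X : Finset ℕ) (B : Set (Atom L)) :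
    MeasurableSet {s : Set (Atom L) | AgreeOn X s B} := by
  have := measurable_Ev (L := L) (𝒦 := Set.univ) MeasurableSet.univ X.powerset B
  rw [Ev_powerset] at this
  simpa using this

theorem decomp (hN : Nice 𝒦) (X : Finset ℕ) (S : Set (Set (Atom L))) (hS : S ⊆ 𝒦)
    (hdet : ∀ s ∈ 𝒦, ∀ s' ∈ 𝒦, AgreeOn X s s' → s ∈ S → s' ∈ S) :
    S = ⋃ s0 ∈ Pat 𝒦 X ∩ S, Ev 𝒦 X.powerset s0 := by
  ext s
  simp only [Set.mem_iUnion, Ev_powerset]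
  constructor
  · intro hs
    have h1 := resS_mem hN X s (hS hs)
    have h2 := resS_agree X s
    refine ⟨resS X s, ⟨⟨h1, fun a ha => ha.2⟩, ?_⟩, hS hs, fun b hb => (h2 b hb).symm⟩
    exact hdet s (hS hs) _ h1 (fun b hb => (h2 b hb).symm) hs
  · rintro ⟨s0, ⟨⟨h1, _⟩, h2⟩, h3, h4⟩
    exact hdet s0 h1 s h3 (fun b hb => (h4 b hb).symm) h2

theorem decomp_disj (X : Finset ℕ) (S : Set (Set (Atom L))) :
    (Pat 𝒦 X ∩ S).PairwiseDisjoint fun s0 => Ev 𝒦 X.powerset s0 := by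
  rintro s0 ⟨h0, _⟩ s1 ⟨h1, _⟩ hne
  refine Set.disjoint_left.2 fun s hs hs' => hne ?_
  beta_reduce at hs hs'
  rw [Ev_powerset] at hs hs'
  ext a
  constructor
  · intro ha
    exact (hs'.2 a (h0.2 a ha)).1 ((hs.2 a (h0.2 a ha)).2 ha)
  · intro ha
    exact (hs.2 a (h1.2 a ha)).1 ((hs'.2 a (h1.2 a ha)).2 ha)

theorem step_bound [∀ n, Finite (L.Relations n)] (hN : Nice 𝒦) (hm : MeasurableSet 𝒦)
    (ν : Measure (Set (Atom L))) (δ : ENNReal) (X G : Finset ℕ) (B : Set (Atom L))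
    (S : Set (Set (Atom L))) (hS : S ⊆ 𝒦)
    (hdet : ∀ s ∈ 𝒦, ∀ s' ∈ 𝒦, AgreeOn X s s' → s ∈ S → s' ∈ S)
    (hδ : ∀ s0 ∈ S, δ * ν (Ev 𝒦 X.powerset s0) ≤
      ν (Ev 𝒦 X.powerset s0 ∩ {s | AgreeOn G s B})) :
    MeasurableSet S ∧ δ * ν S ≤ ν (S ∩ {s | AgreeOn G s B}) := by
  have hd := decomp hN X S hS hdet
  have hc : (Pat 𝒦 X ∩ S).Countable := (Pat_countable hN X).mono Set.inter_subset_left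
  have hme : ∀ s0 ∈ Pat 𝒦 X ∩ S, MeasurableSet (Ev 𝒦 X.powerset s0) :=
    fun s0 _ => measurable_Ev hm _ _
  have hdis := decomp_disj (𝒦 := 𝒦) X S
  constructor
  · rw [hd]; exact MeasurableSet.biUnion hc hme
  have e1 : ν S = ∑' s0 : ↥(Pat 𝒦 X ∩ S), ν (Ev 𝒦 X.powerset s0) := by
    conv_lhs => rw [hd]
    exact measure_biUnion hc hdis hme
  have e2 : ν (S ∩ {s | AgreeOn G s B}) = ∑' s0 : ↥(Pat 𝒦 X ∩ S),
      ν (Ev 𝒦 X.powerset s0 ∩ {s | AgreeOn G s B}) := by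
    conv_lhs => rw [hd, Set.iUnion₂_inter]
    refine measure_biUnion hc ?_ fun s0 h => (hme s0 h).inter (measurable_agree _ _)
    exact hdis.mono fun s0 => Set.inter_subset_left
  rw [e1, e2, ← ENNReal.tsum_mul_left]
  exact ENNReal.tsum_le_tsum fun s0 => hδ s0 s0.2.2

theorem ext_null [∀ n, Finite (L.Relations n)] (hN : Nice 𝒦) (hm : MeasurableSet 𝒦)
    (ν : Measure (Set (Atom L))) [IsProbabilityMeasure ν]
    (hEv : ∀ X : Finset ℕ, ∀ 𝒴 ⊆ X.powerset, (∀ Y ∈ 𝒴, ∀ Z, Z ⊆ Y → Z ∈ 𝒴) →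
      ∀ s0 ∈ 𝒦, ν (Ev 𝒦 𝒴 s0) = ∏ Y ∈ 𝒴, ((Choices 𝒦 s0 Y).ncard : ENNReal)⁻¹)
    (F : Finset ℕ) (B : Set (Atom L)) (hB : B ∈ 𝒦) (p : ℕ) (hp : p ∉ F) :
    ν {s | s ∈ 𝒦 ∧ AgreeOn F s B ∧ ∀ x, x ∉ F →
      ¬ AgreeOn (insert x F) s {a | permA (Equiv.swap p x) a ∈ B}} = 0 := by
  set δ : ENNReal := ((bnd L (F.card + 1) : ENNReal))⁻¹ ^ (2 ^ (F.card + 1)) with hδ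
  have hδ0 : δ ≠ 0 := by simp [hδ]
  let y : ℕ → ℕ := fun i => F.sup id + 1 + i
  have hy : ∀ i, y i ∉ F := by
    intro i hi
    have := Finset.le_sup (f := id) hi
    simp only [id, y] at this
    omega
  let Bx : ℕ → Set (Atom L) := fun x => {a | permA (Equiv.swap p x) a ∈ B}
  have hBx : ∀ x, Bx x ∈ 𝒦 := fun x => hN.perm B hB _
  have hBF : ∀ x, x ∉ F → AgreeOn F (Bx x) B := by
    intro x hx b hb
    have : permA (Equiv.swap p x) b = b := by
      obtain ⟨n, R, t⟩ := b
      rw [supp_subset] at hb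
      simp only [permA]
      congr 2
      funext i
      have := hb i
      simp only at this
      exact Equiv.swap_apply_of_ne_of_ne (by rintro rfl; exact hp this) (by rintro rfl; exact hx this)
    show permA (Equiv.swap p x) b ∈ B ↔ _
    rw [this]
  let S : ℕ → Set (Set (Atom L)) := fun m =>
    {s | s ∈ 𝒦 ∧ AgreeOn F s B ∧ ∀ i < m, ¬ AgreeOn (insert (y i) F) s (Bx (y i))}
  let X : ℕ → Finset ℕ := fun m => F ∪ (Finset.range m).image y
  have hX : ∀ m, y m ∉ X m := by
    intro m h
    simp only [X, Finset.mem_union, hy, false_or, Finset.mem_image, Finset.mem_range, y] at h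
    omega
  have hFX : ∀ m, F ⊆ X m := fun m => Finset.subset_union_left
  have hdet : ∀ m, ∀ s ∈ 𝒦, ∀ s' ∈ 𝒦, AgreeOn (X m) s s' → s ∈ S m → s' ∈ S m := by
    rintro m s _ s' hs' hag ⟨_, h1, h2⟩
    refine ⟨hs', fun b hb => (hag b (hb.trans (hFX m))).symm.trans (h1 b hb), fun i hi h => ?_⟩
    refine h2 i hi fun b hb => (hag b (hb.trans ?_)).trans (h b hb)
    refine Finset.insert_subset ?_ (hFX m)
    exact Finset.mem_union_right _ (Finset.mem_image_of_mem _ (Finset.mem_range.2 hi))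
  have hst : ∀ m, MeasurableSet (S m) ∧ δ * ν (S m) ≤
      ν (S m ∩ {s | AgreeOn (insert (y m) F) s (Bx (y m))}) := by
    intro m
    refine step_bound hN hm ν δ (X m) _ _ (S m) (fun s hs => hs.1) (hdet m) fun s0 hs0 => ?_
    refine cond_bound hN ν hEv (X m) F (y m) (hX m) s0 _ hs0.1 (hBx _) fun b hb => ?_
    exact (hs0.2.1 b hb).trans (hBF _ (hy m) b hb).symm
  have hle : ∀ m, ν (S m) ≤ (1 - δ) ^ m := by
    intro m
    induction m with
    | zero => simpa using prob_le_one
    | succ m ih =>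
      have e : S (m + 1) = S m \ {s | AgreeOn (insert (y m) F) s (Bx (y m))} := by
        ext s
        constructor
        · rintro ⟨h1, h2, h3⟩
          exact ⟨⟨h1, h2, fun i hi => h3 i (by omega)⟩, h3 m (by omega)⟩
        · rintro ⟨⟨h1, h2, h3⟩, h4⟩
          refine ⟨h1, h2, fun i hi => ?_⟩
          rcases Nat.lt_succ_iff_lt_or_eq.1 hi with h | rfl
          · exact h3 i h
          · exact h4
      have h1 := measure_inter_add_sdiff (μ := ν) (S m)
        (measurable_agree (insert (y m) F) (Bx (y m)))
      rw [← e] at h1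
      have hfin : δ * ν (S m) ≠ ⊤ := ne_top_of_le_ne_top (measure_ne_top _ _) (hst m).2
      have h2 : ν (S (m + 1)) ≤ ν (S m) - δ * ν (S m) := by
        refine ENNReal.le_sub_of_add_le_left hfin ?_
        rw [← h1]
        gcongr
        rw [h1]
        exact (hst m).2
      calc ν (S (m + 1)) ≤ ν (S m) - δ * ν (S m) := h2
        _ = (1 - δ) * ν (S m) := by
          rw [ENNReal.sub_mul (fun _ _ => measure_ne_top _ _), one_mul]
        _ ≤ (1 - δ) * (1 - δ) ^ m := by gcongr
        _ = (1 - δ) ^ (m + 1) := by rw [pow_succ']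
  have hlt : 1 - δ < 1 := ENNReal.sub_lt_self (by simp) (by simp) hδ0
  have ht := ENNReal.tendsto_pow_atTop_nhds_zero_of_lt_one hlt
  refine le_antisymm (ge_of_tendsto' ht fun m => ?_) zero_le
  refine (measure_mono ?_).trans (hle m)
  rintro s ⟨h1, h2, h3⟩
  exact ⟨h1, h2, fun i _ => h3 _ (hy i)⟩

theorem ext_ae [∀ n, Finite (L.Relations n)] (hN : Nice 𝒦) (hm : MeasurableSet 𝒦)
    (ν : Measure (Set (Atom L))) [IsProbabilityMeasure ν]
    (hEv : ∀ X : Finset ℕ, ∀ 𝒴 ⊆ X.powerset, (∀ Y ∈ 𝒴, ∀ Z, Z ⊆ Y → Z ∈ 𝒴) →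
      ∀ s0 ∈ 𝒦, ν (Ev 𝒦 𝒴 s0) = ∏ Y ∈ 𝒴, ((Choices 𝒦 s0 Y).ncard : ENNReal)⁻¹) :
    ∀ᵐ s ∂ν, s ∈ 𝒦 → ∀ (F : Finset ℕ) (p : ℕ), p ∉ F → ∀ B ∈ 𝒦, AgreeOn F s B →
      ∃ x, x ∉ F ∧ AgreeOn (insert x F) s {a | permA (Equiv.swap p x) a ∈ B} := by
  have h : ∀ᵐ s ∂ν, ∀ (F : Finset ℕ) (p : ℕ), ∀ B ∈ Pat 𝒦 (insert p F), p ∉ F →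
      ¬ (s ∈ 𝒦 ∧ AgreeOn F s B ∧ ∀ x, x ∉ F →
      ¬ AgreeOn (insert x F) s {a | permA (Equiv.swap p x) a ∈ B}) := by
    rw [ae_all_iff]; intro F
    rw [ae_all_iff]; intro p
    rw [ae_ball_iff (Pat_countable hN _)]
    intro B hB
    by_cases hp : p ∈ F
    · simp [hp]
    · have := ext_null hN hm ν hEv F B hB.1 p hp
      simp only [hp, not_false_eq_true, forall_const]
      rw [ae_iff]
      simpa using this
  filter_upwards [h] with s hs hsK F p hp B hB hag
  have h1 := resS_agree (insert p F) B
  have h2 := hs F p (resS (insert p F) B) ⟨resS_mem hN _ _ hB, fun a ha => ha.2⟩ hp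
  by_contra hcon
  refine h2 ⟨hsK, fun b hb => (hag b hb).trans
    (h1 b (hb.trans (Finset.subset_insert _ _))).symm, fun x hx h3 => hcon ⟨x, hx, ?_⟩⟩
  intro b hb
  refine (h3 b hb).trans (h1 (permA (Equiv.swap p x) b) ?_)
  rw [supp_permA]
  intro z hz
  obtain ⟨w, hw, rfl⟩ := Finset.mem_image.1 hz
  rcases Finset.mem_insert.1 (hb hw) with rfl | hw
  · simp
  · rw [Equiv.swap_apply_of_ne_of_ne (by rintro rfl; exact hp hw) (by rintro rfl; exact hx hw)]
    exact Finset.mem_insert_of_mem hw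

end Ext

section Limit

variable {𝒦 : Set (Set (Atom L))}

/-- The almost sure extension property. -/
def HasExt (𝒦 : Set (Set (Atom L))) (s : Set (Atom L)) : Prop :=
  ∀ (F : Finset ℕ) (p : ℕ), p ∉ F → ∀ B ∈ 𝒦, AgreeOn F s B →
      ∃ x, x ∉ F ∧ AgreeOn (insert x F) s {a | permA (Equiv.swap p x) a ∈ B}

/-- The permutation `σ` is an isomorphism on `F`. -/
def MatchOn (s0 s : Set (Atom L)) (σ : Equiv.Perm ℕ) (F : Finset ℕ) : Prop :=
  ∀ b, supp b ⊆ F → (b ∈ s0 ↔ permA σ b ∈ s)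

theorem match_extend (hN : Nice 𝒦) {s : Set (Atom L)} (hs : HasExt 𝒦 s) {s0 : Set (Atom L)}
    (hs0 : s0 ∈ 𝒦) (σ : Equiv.Perm ℕ) (F : Finset ℕ) (h : MatchOn s0 s σ F) (p : ℕ) :
    ∃ sg2 : Equiv.Perm ℕ, (∀ y ∈ F, sg2 y = σ y) ∧ MatchOn s0 s sg2 (insert p F) := by
  by_cases hp : p ∈ F
  · exact ⟨σ, fun _ _ => rfl, by rwa [Finset.insert_eq_of_mem hp]⟩
  have hp' : σ p ∉ F.image σ := by simpa using hp
  obtain ⟨x, hx, hag⟩ := hs (F.image σ) (σ p) hp' {a | permA σ⁻¹ a ∈ s0} (hN.perm s0 hs0 _) (by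
    intro b hb
    have h1 := h (permA σ⁻¹ b) (by
      rw [supp_permA]
      intro z hz
      obtain ⟨w, hw, rfl⟩ := Finset.mem_image.1 hz
      obtain ⟨y, hy, rfl⟩ := Finset.mem_image.1 (hb hw)
      simpa using hy)
    rw [permA_permA, mul_inv_cancel, permA_one] at h1
    exact h1.symm)
  have hfix : ∀ y ∈ F, (Equiv.swap (σ p) x * σ) y = σ y := by
    intro y hy
    have : σ y ∈ F.image σ := Finset.mem_image_of_mem _ hy
    exact Equiv.swap_apply_of_ne_of_ne (fun e => hp' (e ▸ this)) (fun e => hx (e ▸ this))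
  refine ⟨Equiv.swap (σ p) x * σ, hfix, ?_⟩
  intro b hb
  have h2 := hag (permA (Equiv.swap (σ p) x * σ) b) (by
    rw [supp_permA]
    intro z hz
    obtain ⟨w, hw, rfl⟩ := Finset.mem_image.1 hz
    rcases Finset.mem_insert.1 (hb hw) with rfl | hw
    · simp
    · rw [hfix w hw]
      exact Finset.mem_insert_of_mem (Finset.mem_image_of_mem _ hw))
  rw [h2]
  show b ∈ s0 ↔ permA σ⁻¹ (permA _ _) ∈ s0
  rw [permA_permA, permA_permA]
  have : σ⁻¹ * (Equiv.swap (σ p) x * (Equiv.swap (σ p) x * σ)) = 1 := by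
    rw [← mul_assoc (Equiv.swap _ _), Equiv.swap_mul_self]; simp
  rw [mul_assoc, this, permA_one]

theorem match_exists [IsEmpty (L.Relations 0)] (hN : Nice 𝒦) {s : Set (Atom L)}
    (hs : HasExt 𝒦 s) {s0 : Set (Atom L)}
    (hs0 : s0 ∈ 𝒦) (F : Finset ℕ) : ∃ σ : Equiv.Perm ℕ, MatchOn s0 s σ F := by
  induction F using Finset.induction_on with
  | empty =>
    refine ⟨1, fun b hb => ?_⟩
    obtain ⟨n, R, t⟩ := b
    cases n with
    | zero => exact isEmptyElim R
    | succ n =>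
      have := (supp_subset _ _).1 hb 0
      simp at this
  | insert p F _ ih =>
    obtain ⟨σ, hσ⟩ := ih
    obtain ⟨sg2, _, h⟩ := match_extend hN hs hs0 σ F hσ p
    exact ⟨sg2, h⟩

theorem exists_perm (F : Finset ℕ) (f : {x // x ∈ F} → ℕ) (hf : Function.Injective f) :
    ∃ σ : Equiv.Perm ℕ, ∀ x : {x // x ∈ F}, σ x = f x := by
  classical
  let e1 : {x // x ∈ F} ≃ {x // x ∈ Set.range f} := Equiv.ofInjective f hf
  have i1 : Infinite {x // ¬ x ∈ F} := F.finite_toSet.infinite_compl.to_subtype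
  have i2 : Infinite {x // ¬ x ∈ Set.range f} :=
    (Set.finite_range f).infinite_compl.to_subtype
  obtain ⟨e2⟩ : Nonempty ({x // ¬ x ∈ F} ≃ {x // ¬ x ∈ Set.range f}) := nonempty_equiv_of_countable
  refine ⟨Equiv.subtypeCongr e1 e2, fun x => ?_⟩
  simp [Equiv.subtypeCongr, Equiv.sumCompl_symm_apply_of_pos x.2, e1]

theorem isFraisse_of_ext [L.IsRelational] [IsEmpty (L.Relations 0)] [Countable (Σ l, L.Functions l)]
    (Φ : L.Theory) (hloc : ∀ φ ∈ Φ, IsLocalSentence φ) (hN : Nice (AK Φ))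
    (K : Set (FinStruc L)) (hK : K = { A : FinStruc L | ∀ φ ∈ Φ, A.Sat φ })
    (M : InfStruc L) (hM : M ∈ KinfSet Φ) (hs : HasExt (AK Φ) (atoms M)) :
    @IsFraisseLimit L (toBundled L K) ℕ M.str _ _ := by
  let inst : L.Structure ℕ := M.str
  have hrel : ∀ {n} (R : L.Relations n) (t : Fin n → ℕ),
      Structure.RelMap R t ↔ (⟨n, R, t⟩ : Atom L) ∈ atoms M := fun R t => Iff.rfl
  have hMA : atoms M ∈ AK Φ := hM
  refine ⟨?_, ?_⟩
  · rw [isUltrahomogeneous_iff_IsExtensionPair Structure.cg_of_countable,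
      isExtensionPair_iff_exists_embedding_closure_singleton_sup]
    intro S hS f m
    have hfin : (S : Set ℕ).Finite := hS.finite
    let F : Finset ℕ := hfin.toFinset
    have hF : ∀ x, x ∈ F ↔ x ∈ S := fun x => by simp [F]
    obtain ⟨σ, hσ⟩ := exists_perm F (fun x => f ⟨x, (hF _).1 x.2⟩) (by
      intro x y hxy
      have := f.injective hxy
      exact Subtype.ext (Subtype.mk.inj this))
    have hmatch : MatchOn (atoms M) (atoms M) σ F := by
      rintro ⟨n, R, t⟩ hb
      rw [supp_subset] at hb
      have h1 := f.map_rel R (fun i => ⟨t i, (hF _).1 (hb i)⟩)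
      have h2 : (f ∘ fun i => (⟨t i, (hF _).1 (hb i)⟩ : S)) = fun i => σ (t i) :=
        funext fun i => (hσ ⟨t i, hb i⟩).symm
      rw [h2] at h1
      exact h1.symm
    obtain ⟨sg2, h1, h2⟩ := match_extend hN hs hMA σ F hmatch m
    have hmem : ∀ x : (Substructure.closure L {m} ⊔ S : L.Substructure ℕ), (x : ℕ) ∈ insert m F := by
      rintro ⟨x, hx⟩
      rw [← Substructure.closure_eq S, ← Substructure.closure_union,
        Substructure.mem_closure_iff_of_isRelational] at hx
      simpa [hF] using hx
    refine ⟨⟨⟨fun x => sg2 x, fun x y h => Subtype.ext (sg2.injective h)⟩,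
      fun f _ => isEmptyElim f, fun {n} R t => ?_⟩, ?_⟩
    · have := h2 ⟨n, R, fun i => (t i : ℕ)⟩ ((supp_subset _ _).2 fun i => hmem (t i))
      exact this.symm
    · ext x
      have h3 := h1 x ((hF _).2 x.2)
      have h4 := hσ ⟨x, (hF _).2 x.2⟩
      show f x = sg2 x
      rw [h3, h4]
  · ext N
    constructor
    · rintro ⟨hFG, ⟨f⟩⟩
      have hfinN : Finite N := hFG.finite
      let X : Finset ℕ := (Set.finite_range f).toFinset
      have hX : ∀ x, x ∈ X ↔ ∃ y, f y = x := fun x => by simp [X]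
      refine ⟨M.restrict X, by rw [hK]; exact restrict_mem_K Φ hloc M hM X, ?_⟩
      let g : N → {x : ℕ // x ∈ (M.restrict X).carrier} := fun y => ⟨f y, (hX _).2 ⟨y, rfl⟩⟩
      have hg : Function.Bijective g := by
        constructor
        · intro x y hxy
          exact f.injective (congrArg Subtype.val hxy)
        · rintro ⟨x, hx⟩
          obtain ⟨y, rfl⟩ := (hX _).1 hx
          exact ⟨y, rfl⟩
      refine ⟨⟨Equiv.ofBijective g hg, fun f _ => isEmptyElim f, fun {n} R t => ?_⟩⟩
      refine Iff.trans ?_ (f.map_rel R t)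
      show (_ ∧ _) ↔ _
      exact ⟨fun h => h.1, fun h => ⟨h, fun i => (hX _).2 ⟨t i, rfl⟩⟩⟩
    · rintro ⟨A, hA, ⟨e⟩⟩
      rw [hK] at hA
      have hfinN : Finite N := Finite.of_equiv _ e.toEquiv.symm
      refine ⟨Structure.FG.of_finite, ⟨?_⟩⟩
      let s0 : Set (Atom L) := atoms ⟨A.rel⟩
      have hs0 : s0 ∈ AK Φ := mem_Kinf_of_K Φ hloc A hA
      have hex := match_exists hN hs hs0 A.carrier
      let σ := hex.choose
      have hσ : MatchOn s0 (atoms M) σ A.carrier := hex.choose_spec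
      refine Embedding.comp (N := {x : ℕ // x ∈ A.carrier}) ?_ e.toEmbedding
      refine ⟨⟨fun x => σ x, fun x y h => Subtype.ext (σ.injective h)⟩,
        fun f _ => isEmptyElim f, fun {n} R t => ?_⟩
      exact (hσ ⟨n, R, fun i => (t i : ℕ)⟩ ((supp_subset _ _).2 fun i => (t i).2)).symm

end Limit

section Final

open MeasureTheory

/-- Atoms of a finite structure. -/
def fat (A : FinStruc L) : Set (Atom L) := {a | a.2.2 ∈ A.rel a.2.1}

theorem fin_ext {A B : FinStruc L} (h1 : A.carrier = B.carrier) (h2 : fat A = fat B) : A = B := by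
  obtain ⟨c, r, hr⟩ := A
  obtain ⟨c', r', hr'⟩ := B
  dsimp at h1
  subst h1
  have : r = r' := by
    funext n R
    ext t
    exact Set.ext_iff.1 h2 ⟨n, R, t⟩
  subst this
  rfl

theorem fat_frame (A : FinStruc L) (k : ℕ) (a : Atom L) :
    a ∈ fat (A.frame k) ↔ a ∈ fat A ∧ a.1 ≤ k := by
  show a.2.2 ∈ (if a.1 ≤ k then A.rel a.2.1 else ∅) ↔ a.2.2 ∈ A.rel a.2.1 ∧ _
  split_ifs with h <;> simp [h]

theorem fat_restrict (A : FinStruc L) (X : Finset ℕ) (a : Atom L) :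
    a ∈ fat (A.restrict X) ↔ a ∈ fat A ∧ supp a ⊆ X := by
  rw [supp_subset]; rfl

theorem fat_inf_restrict (M : InfStruc L) (X : Finset ℕ) (a : Atom L) :
    a ∈ fat (M.restrict X) ↔ a ∈ atoms M ∧ supp a ⊆ X := by
  rw [supp_subset]; rfl

theorem fat_supp (A : FinStruc L) (a : Atom L) (ha : a ∈ fat A) : supp a ⊆ A.carrier := by
  rw [supp_subset]; exact A.rel_mem _ _ ha

theorem mem_Oinf (A : FinStruc L) (k : ℕ) (M : InfStruc L) :
    M ∈ Oinf A k ↔ ∀ a : Atom L, a.1 ≤ k → supp a ⊆ A.carrier → (a ∈ atoms M ↔ a ∈ fat A) := by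
  constructor
  · intro h a h1 h2
    have : fat ((M.restrict A.carrier).frame k) = fat (A.frame k) := congrArg fat h
    have := Set.ext_iff.1 this a
    rw [fat_frame, fat_frame, fat_inf_restrict] at this
    simpa [h1, h2] using this
  · intro h
    refine fin_ext rfl ?_
    ext a
    rw [fat_frame, fat_frame, fat_inf_restrict]
    constructor
    · rintro ⟨⟨h1, h2⟩, h3⟩
      exact ⟨(h a h3 h2).1 h1, h3⟩
    · rintro ⟨h1, h3⟩
      have h2 := fat_supp A a h1
      exact ⟨⟨(h a h3 h2).2 h1, h2⟩, h3⟩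

theorem finite_low [∀ n, Finite (L.Relations n)] (X : Finset ℕ) (k : ℕ) :
    {a : Atom L | a.1 ≤ k ∧ supp a ⊆ X}.Finite := by
  let g : (Σ n : Fin (k + 1), L.Relations n × (Fin n → X)) → Atom L :=
    fun p => ⟨p.1, p.2.1, fun i => p.2.2 i⟩
  refine (Set.finite_range g).subset ?_
  rintro ⟨n, R, t⟩ ⟨h1, h2⟩
  rw [supp_subset] at h2
  exact ⟨⟨⟨n, Nat.lt_succ_of_le h1⟩, R, fun i => ⟨t i, h2 i⟩⟩, rfl⟩

theorem measurable_atoms [∀ n, Finite (L.Relations n)] :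
    @Measurable _ _ (frameEvents L) _ (atoms (L := L)) := by
  let inst := frameEvents L
  refine measurable_set_iff.2 fun a => measurableSet_setOfPred.1 ?_
  let 𝒜 : Set (FinStruc L) := {A | A.carrier = supp a ∧ A.frame a.1 = A ∧ a ∈ fat A}
  have hc : 𝒜.Finite := by
    refine Set.Finite.of_finite_image (f := fat) ?_ ?_
    · refine (finite_low (L := L) (supp a) a.1).finite_subsets.subset ?_
      rintro _ ⟨A, ⟨h1, h2, _⟩, rfl⟩ b hb
      refine ⟨?_, h1 ▸ fat_supp A b hb⟩
      rw [← h2, fat_frame] at hb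
      exact hb.2
    · intro A hA B hB h
      exact fin_ext (hA.1.trans hB.1.symm) h
  have e : {M : InfStruc L | a ∈ atoms M} = ⋃ A ∈ 𝒜, Oinf A a.1 := by
    ext M
    simp only [Set.mem_iUnion]
    constructor
    · intro h
      have hf : a ∈ fat ((M.restrict (supp a)).frame a.1) := by
        rw [fat_frame, fat_inf_restrict]
        exact ⟨⟨h, subset_rfl⟩, le_rfl⟩
      refine ⟨(M.restrict (supp a)).frame a.1, ⟨rfl, ?_, hf⟩, ?_⟩
      · refine fin_ext rfl ?_
        ext b
        rw [fat_frame]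
        simp only [fat_frame]
        tauto
      · rw [mem_Oinf]
        intro b hb hb'
        rw [fat_frame, fat_inf_restrict]
        exact ⟨fun h => ⟨⟨h, hb'⟩, hb⟩, fun h => h.1.1⟩
    · rintro ⟨A, ⟨h1, h2, h3⟩, hM⟩
      exact ((mem_Oinf _ _ _).1 hM a le_rfl (h1 ▸ subset_rfl)).2 h3
  rw [e]
  exact hc.measurableSet_biUnion fun A _ => MeasurableSpace.measurableSet_generateFrom ⟨A, _, rfl⟩

theorem measurable_realize [L.IsRelational] {n : ℕ} (φ : L.BoundedFormula Empty n) :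
    ∀ xs : Fin n → ℕ, MeasurableSet {s : Set (Atom L) |
      @BoundedFormula.Realize L ℕ (mkS s).str Empty n φ default xs} := by
  induction φ with
  | falsum => intro xs; simp [BoundedFormula.Realize]
  | equal t₁ t₂ =>
    intro xs
    obtain ⟨i, rfl⟩ := term_isVar t₁
    obtain ⟨j, rfl⟩ := term_isVar t₂
    simp [BoundedFormula.Realize]
  | rel R ts =>
    intro xs
    choose f hf using fun i => term_isVar (ts i)
    have : ts = fun i => Term.var (Sum.inr (f i)) := funext hf
    subst this
    exact measurableSet_setOfPred.2 (measurable_set_mem (⟨_, R, fun i => xs (f i)⟩ : Atom L))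
  | imp φ₁ φ₂ h₁ h₂ =>
    intro xs
    have e : {s : Set (Atom L) |
      @BoundedFormula.Realize L ℕ (mkS s).str Empty _ (φ₁.imp φ₂) default xs} =
      {s : Set (Atom L) | @BoundedFormula.Realize L ℕ (mkS s).str Empty _ φ₁ default xs}ᶜ ∪
      {s : Set (Atom L) | @BoundedFormula.Realize L ℕ (mkS s).str Empty _ φ₂ default xs} := by
      ext s
      exact imp_iff_not_or
    rw [e]
    exact (h₁ xs).compl.union (h₂ xs)
  | all φ h =>
    intro xs
    have e : {s : Set (Atom L) |
      @BoundedFormula.Realize L ℕ (mkS s).str Empty _ φ.all default xs} =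
      ⋂ x : ℕ, {s : Set (Atom L) |
        @BoundedFormula.Realize L ℕ (mkS s).str Empty _ φ default (Fin.snoc xs x)} := by
      ext s
      simp only [Set.mem_iInter]
      exact Iff.rfl
    rw [e]
    exact MeasurableSet.iInter fun x => h _

theorem measurable_AK [L.IsRelational] [∀ n, Finite (L.Relations n)] (Φ : L.Theory) :
    MeasurableSet (AK Φ) := by
  have h1 : ∀ n, Countable (L.Relations n) := fun n => inferInstance
  have h2 : ∀ n, Countable (L.Functions n) := fun n => inferInstance
  have h3 : Countable L.Sentence := inferInstanceAs (Countable (L.Formula Empty))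
  have e : AK Φ = ⋂ φ ∈ Φ, {s | (mkS s).Sat φ} := by
    ext s
    simp only [Set.mem_iInter]
    exact Iff.rfl
  rw [e]
  exact MeasurableSet.biInter (Set.to_countable Φ) fun φ _ => by
    have h := measurable_realize φ default
    refine (congrArg MeasurableSet ?_).mp h
    ext s
    simp only [Set.mem_setOf_eq, InfStruc.Sat, Sentence.Realize, Formula.Realize]
    exact iff_of_eq (congrArg₂ (fun u w => @BoundedFormula.Realize L ℕ (mkS s).str Empty 0 φ u w)
      (Subsingleton.elim _ _) (Subsingleton.elim _ _))

theorem nice_AK [L.IsRelational] (Φ : L.Theory) (hloc : ∀ φ ∈ Φ, IsLocalSentence φ)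
    (hGI : GITheory L ⊆ Φ) : Nice (AK Φ) :=
  ⟨glue Φ hloc, perm_mem Φ hloc, inj_of_mem Φ hGI⟩

theorem Oinf_eq [L.IsRelational] (Φ : L.Theory) (hN : Nice (AK Φ)) (X : Finset ℕ)
    (s0 : Set (Atom L)) (hs0 : s0 ∈ AK Φ) (k : ℕ) :
    Oinf ((mkS s0).restrict X) k ∩ KinfSet Φ =
      atoms ⁻¹' Ev (AK Φ) (X.powerset.filter fun Y => Y.card ≤ k) s0 := by
  ext M
  constructor
  · rintro ⟨h1, h2⟩
    rw [mem_Oinf] at h1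
    have h2' : atoms M ∈ AK Φ := h2
    refine ⟨h2', ?_⟩
    rintro Y hY b rfl
    rw [Finset.mem_filter, Finset.mem_powerset] at hY
    by_cases hb : b.1 ≤ k
    · rw [h1 b hb hY.1, fat_inf_restrict]
      exact ⟨fun h => h.1, fun h => ⟨h, hY.1⟩⟩
    · constructor
      · intro h
        exact (hb (hN.card _ h2' b h ▸ hY.2)).elim
      · intro h
        exact (hb (hN.card _ hs0 b h ▸ hY.2)).elim
  · rintro ⟨h1, h2⟩
    refine ⟨?_, h1⟩
    rw [mem_Oinf]
    intro b hb hb'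
    have : (supp b).card ≤ b.1 := by
      refine Finset.card_image_le.trans ?_
      simp
    have h3 := h2 (supp b) (Finset.mem_filter.2 ⟨Finset.mem_powerset.2 hb', this.trans hb⟩) b rfl
    rw [h3, fat_inf_restrict]
    exact ⟨fun h => ⟨h, hb'⟩, fun h => h.1⟩

theorem rel_zero_empty [L.IsRelational] [∀ n, Finite (L.Relations n)]
    (Φ : L.Theory) (hloc : ∀ φ ∈ Φ, IsLocalSentence φ)
    (K : Set (FinStruc L)) (hK : K = { A : FinStruc L | ∀ φ ∈ Φ, A.Sat φ })
    (μ : @MeasureTheory.Measure (InfStruc L) (frameEvents L))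
    (hprob : MeasureTheory.IsProbabilityMeasure μ)
    (h0 : ∀ A ∈ K, μ (Oinf A 0 ∩ KinfSet Φ) = 1) : IsEmpty (L.Relations 0) := by
  refine ⟨fun P => ?_⟩
  let inst := frameEvents L
  have hin : ∀ A : FinStruc L, A.carrier = ∅ → A ∈ K := by
    intro A hA
    rw [hK]
    intro φ hφ
    refine sat_transfer (α := {x // x ∈ A.carrier}) φ (hloc φ hφ) fun m hm R xs _ => ?_
    have h := (Finset.ext_iff.1 hA (xs ⟨0, hm⟩).1).1 (xs ⟨0, hm⟩).2
    simp at h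
  let A1 : FinStruc L := ⟨∅, fun _ _ => ∅, fun n R t ht => by simp at ht⟩
  let A2 : FinStruc L := ⟨∅, fun n _ => {_t | n = 0}, fun n R t ht i => by
    have : n = 0 := ht
    subst this
    exact i.elim0⟩
  have e1 := h0 A1 (hin _ rfl)
  have e2 := h0 A2 (hin _ rfl)
  have hm : MeasurableSet (Oinf A1 0) := MeasurableSpace.measurableSet_generateFrom ⟨A1, 0, rfl⟩
  have e3 : μ (Oinf A1 0) = 1 :=
    le_antisymm prob_le_one (e1 ▸ measure_mono Set.inter_subset_left)
  have e4 : μ (Oinf A1 0)ᶜ = 0 := (prob_compl_eq_zero_iff hm).2 e3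
  have : Oinf A2 0 ∩ KinfSet Φ ⊆ (Oinf A1 0)ᶜ := by
    rintro M ⟨h2, _⟩ h1
    let a : Atom L := ⟨0, P, Fin.elim0⟩
    have ha : supp a ⊆ ∅ := (supp_subset _ _).2 fun i => i.elim0
    have f1 := ((mem_Oinf _ _ _).1 h1 a le_rfl ha)
    have f2 := ((mem_Oinf _ _ _).1 h2 a le_rfl ha)
    have g1 : a ∉ fat A1 := fun h => h
    have g2 : a ∈ fat A2 := rfl
    exact g1 (f1.1 (f2.2 g2))
  have e5 := measure_mono_null this e4
  rw [e2] at e5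
  exact one_ne_zero e5

theorem Ncount_eq [L.IsRelational] [∀ n, Finite (L.Relations n)]
    (Φ : L.Theory) (hloc : ∀ φ ∈ Φ, IsLocalSentence φ) (hN : Nice (AK Φ))
    (K : Set (FinStruc L)) (hK : K = { A : FinStruc L | ∀ φ ∈ Φ, A.Sat φ })
    (X : Finset ℕ) (s0 : Set (Atom L)) (hs0 : s0 ∈ AK Φ) (k : ℕ) :
    Ncount K ((mkS s0).restrict X) k =
      ∏ Y ∈ X.powersetCard (k + 1), (Choices (AK Φ) s0 Y).ncard := by
  set T := KsetFr K X (k + 1) ((mkS s0).restrict X) k with hT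
  -- basic facts on members
  have hfact : ∀ F ∈ T, ∃ s ∈ AK Φ, (∀ a ∈ s, supp a ⊆ X) ∧ F.carrier = X ∧
      (∀ a, a ∈ fat F ↔ a ∈ s ∧ a.1 ≤ k + 1) ∧
      ∀ a : Atom L, a.1 ≤ k → supp a ⊆ X → (a ∈ s ↔ a ∈ s0) := by
    rintro F ⟨B, hB, hBX, hfr, rfl⟩
    rw [hK] at hB
    refine ⟨fat B, mem_Kinf_of_K Φ hloc B hB, fun a ha => hBX ▸ fat_supp B a ha, hBX,
      fat_frame B _, fun a h1 h2 => ?_⟩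
    have := Set.ext_iff.1 (congrArg fat hfr) a
    rw [fat_frame, fat_restrict, fat_frame, fat_inf_restrict] at this
    have h3 : supp a ⊆ ((mkS s0).restrict X).carrier := h2
    have h4 : a ∈ atoms (mkS s0) ↔ a ∈ s0 := Iff.rfl
    simpa [h1, h2, h3, h4] using this
  have hlow : ∀ s ∈ AK Φ, (∀ a : Atom L, a.1 ≤ k → supp a ⊆ X → (a ∈ s ↔ a ∈ s0)) →
      ∀ Z, Z ⊆ X → Z.card ≤ k → AgreeAt Z s s0 := by
    rintro s hs h Z hZ hZc b rfl
    by_cases hb : b.1 ≤ k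
    · exact h b hb hZ
    · constructor
      · intro h
        exact (hb (hN.card _ hs b h ▸ hZc)).elim
      · intro h
        exact (hb (hN.card _ hs0 b h ▸ hZc)).elim
  have hmem : ∀ F ∈ T, ∀ Y ∈ X.powersetCard (k + 1),
      {a | a ∈ fat F ∧ supp a = Y} ∈ Choices (AK Φ) s0 Y := by
    intro F hF Y hY
    obtain ⟨s, hs, _, _, hFs, hag⟩ := hfact F hF
    rw [Finset.mem_powersetCard] at hY
    refine ⟨s, hs, fun Z hZ => hlow s hs hag Z (hZ.1.trans hY.1) ?_, ?_⟩
    · have := Finset.card_lt_card hZ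
      omega
    · ext a
      constructor
      · rintro ⟨h1, h2⟩
        exact ⟨((hFs a).1 h1).1, h2⟩
      · rintro ⟨h1, h2⟩
        refine ⟨(hFs a).2 ⟨h1, ?_⟩, h2⟩
        rw [← hN.card s hs a h1, h2, hY.2]
  let g : T → ∀ Y : {Y // Y ∈ X.powersetCard (k + 1)}, Choices (AK Φ) s0 Y :=
    fun F Y => ⟨{a | a ∈ fat F.1 ∧ supp a = Y}, hmem F.1 F.2 Y.1 Y.2⟩
  have hg : Function.Bijective g := by
    constructor
    · rintro ⟨F, hF⟩ ⟨F', hF'⟩ hFF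
      have hFF' : ∀ Y ∈ X.powersetCard (k + 1), ∀ a, supp a = Y → (a ∈ fat F ↔ a ∈ fat F') := by
        intro Y hY a ha
        have h1 := congrArg Subtype.val (congrFun hFF ⟨Y, hY⟩)
        have h2 := Set.ext_iff.1 h1 a
        simpa [g, ha] using h2
      obtain ⟨s, hs, hsX, hc, hFs, hag⟩ := hfact F hF
      obtain ⟨s', hs', hsX', hc', hFs', hag'⟩ := hfact F' hF'
      refine Subtype.ext (fin_ext (hc.trans hc'.symm) ?_)
      ext a
      by_cases hsupp : supp a ⊆ X
      · by_cases hak : a.1 ≤ k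
        · rw [hFs, hFs', hag a hak hsupp, hag' a hak hsupp]
        · by_cases hcard : (supp a).card = k + 1
          · exact hFF' _ (Finset.mem_powersetCard.2 ⟨hsupp, hcard⟩) a rfl
          · rw [hFs, hFs']
            constructor
            · rintro ⟨h1, h2⟩
              have := hN.card s hs a h1
              omega
            · rintro ⟨h1, h2⟩
              have := hN.card s' hs' a h1
              omega
      · rw [hFs, hFs']
        exact ⟨fun h => (hsupp (hsX a h.1)).elim, fun h => (hsupp (hsX' a h.1)).elim⟩
    · intro c
      let s1 : Set (Atom L) := {a | (a ∈ s0 ∧ supp a ⊆ X ∧ (supp a).card ≤ k) ∨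
        ∃ Y : {Y // Y ∈ X.powersetCard (k + 1)}, a ∈ (c Y).1}
      have hcs : ∀ (Y : {Y // Y ∈ X.powersetCard (k + 1)}) a, a ∈ (c Y).1 → supp a = Y.1 :=
        fun Y a ha => choices_supp (c Y).2 ha
      have hc1 : ∀ Y : {Y // Y ∈ X.powersetCard (k + 1)}, Y.1 ⊆ X ∧ Y.1.card = k + 1 :=
        fun Y => Finset.mem_powersetCard.1 Y.2
      have hs1low : ∀ b : Atom L, supp b ⊆ X → (supp b).card ≤ k → (b ∈ s1 ↔ b ∈ s0) := by
        intro b hb hbk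
        constructor
        · rintro (h | ⟨Y, h⟩)
          · exact h.1
          · have := hcs Y b h
            have := (hc1 Y).2
            simp_all
        · intro h
          exact Or.inl ⟨h, hb, hbk⟩
      have hs1top : ∀ (Y : {Y // Y ∈ X.powersetCard (k + 1)}) (b : Atom L), supp b = Y.1 →
          (b ∈ s1 ↔ b ∈ (c Y).1) := by
        intro Y b hb
        constructor
        · rintro (h | ⟨Z, h⟩)
          · have := (hc1 Y).2
            have h' := h.2.2
            rw [hb] at h'
            omega
          · have : Z = Y := Subtype.ext ((hcs Z b h).symm.trans hb)
            rwa [this] at h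
        · intro h
          exact Or.inr ⟨Y, h⟩
      have hs1X : ∀ a ∈ s1, supp a ⊆ X ∧ (supp a).card ≤ k + 1 := by
        rintro a (h | ⟨Y, h⟩)
        · exact ⟨h.2.1, by omega⟩
        · rw [hcs Y a h]
          exact ⟨(hc1 Y).1, (hc1 Y).2.le⟩
      have hs1 : s1 ∈ AK Φ := by
        apply hN.glue
        rintro a (h | ⟨Y, h⟩)
        · refine ⟨s0, hs0, fun b hb => hs1low b (hb.trans h.2.1) ?_⟩
          exact (Finset.card_le_card hb).trans h.2.2
        · obtain ⟨s, hs, hag, hceq⟩ := (c Y).2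
          refine ⟨s, hs, fun b hb => ?_⟩
          rw [hcs Y a h] at hb
          rcases hb.eq_or_ssubset with hb | hb
          · rw [hs1top Y b hb, hceq]
            exact ⟨fun h => h.1, fun h => ⟨h, hb⟩⟩
          · rw [hs1low b (hb.1.trans (hc1 Y).1), hag _ hb b rfl]
            have := Finset.card_lt_card hb
            have := (hc1 Y).2
            omega
      let B := (mkS s1).restrict X
      have hBf : ∀ a, a ∈ fat B ↔ a ∈ s1 := by
        intro a
        rw [fat_inf_restrict]
        exact ⟨fun h => h.1, fun h => ⟨h, (hs1X a h).1⟩⟩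
      have hFT : B.frame (k + 1) ∈ T := by
        refine ⟨B, ?_, rfl, ?_, rfl⟩
        · rw [hK]
          exact restrict_mem_K Φ hloc _ hs1 X
        · refine fin_ext (Finset.inter_self X) ?_
          ext a
          rw [fat_restrict, fat_frame, fat_frame, hBf, fat_inf_restrict]
          have hsc : (supp a).card ≤ a.1 := by
            refine Finset.card_image_le.trans ?_
            simp
          constructor
          · rintro ⟨⟨h1, h2⟩, h3⟩
            exact ⟨⟨(hs1low a h3 (hsc.trans h2)).1 h1, h3⟩, h2⟩
          · rintro ⟨⟨h1, h3⟩, h2⟩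
            exact ⟨⟨(hs1low a h3 (hsc.trans h2)).2 h1, h2⟩, h3⟩
      refine ⟨⟨_, hFT⟩, ?_⟩
      funext Y
      refine Subtype.ext ?_
      ext a
      show a ∈ fat (B.frame (k + 1)) ∧ supp a = Y.1 ↔ _
      rw [fat_frame, hBf]
      constructor
      · rintro ⟨⟨h1, _⟩, h3⟩
        exact (hs1top Y a h3).1 h1
      · intro h
        have h3 := hcs Y a h
        have h4 := (hs1top Y a h3).2 h
        refine ⟨⟨h4, ?_⟩, h3⟩
        rw [← hN.card s1 hs1 a h4]
        exact (hs1X a h4).2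
  have hcard := Nat.card_eq_of_bijective g hg
  rw [Nat.card_pi] at hcard
  show T.ncard = _
  rw [← Nat.card_coe_set_eq, hcard]
  simp only [Nat.card_coe_set_eq]
  exact Finset.prod_coe_sort (X.powersetCard (k + 1)) (fun Y => (Choices (AK Φ) s0 Y).ncard)

theorem base_eq [L.IsRelational] [∀ n, Finite (L.Relations n)]
    (Φ : L.Theory) (hloc : ∀ φ ∈ Φ, IsLocalSentence φ) (hN : Nice (AK Φ))
    (K : Set (FinStruc L)) (hK : K = { A : FinStruc L | ∀ φ ∈ Φ, A.Sat φ })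
    [IsEmpty (L.Relations 0)]
    (μ : @MeasureTheory.Measure (InfStruc L) (frameEvents L))
    (h0 : ∀ A ∈ K, μ (Oinf A 0 ∩ KinfSet Φ) = 1)
    (hrec : ∀ A ∈ K, ∀ k : ℕ,
      μ (Oinf A (k + 1) ∩ KinfSet Φ) =
        μ (Oinf A k ∩ KinfSet Φ) / (Ncount K A k : ENNReal))
    (X : Finset ℕ) (s0 : Set (Atom L)) (hs0 : s0 ∈ AK Φ) (k : ℕ) :
    μ (Oinf ((mkS s0).restrict X) k ∩ KinfSet Φ) =
      ∏ Y ∈ X.powerset.filter (fun Y => Y.card ≤ k),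
        ((Choices (AK Φ) s0 Y).ncard : ENNReal)⁻¹ := by
  have hA : (mkS s0).restrict X ∈ K := by
    rw [hK]; exact restrict_mem_K Φ hloc _ hs0 X
  induction k with
  | zero =>
    rw [h0 _ hA]
    have e : X.powerset.filter (fun Y => Y.card ≤ 0) = {∅} := by
      ext Y
      simp only [Finset.mem_filter, Finset.mem_powerset, Nat.le_zero, Finset.card_eq_zero,
        Finset.mem_singleton]
      exact ⟨fun h => h.2, fun h => ⟨h ▸ Finset.empty_subset _, h⟩⟩
    rw [e, Finset.prod_singleton]
    have h1 := choices_le hN s0 ∅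
    have h2 := choices_ne hN s0 hs0 ∅
    have h3 : (Choices (AK Φ) s0 ∅).ncard = 1 := by
      simp at h1
      omega
    rw [h3]; simp
  | succ k ih =>
    rw [hrec _ hA, ih, Ncount_eq Φ hloc hN K hK X s0 hs0 k]
    have e : X.powerset.filter (fun Y => Y.card ≤ k + 1) =
        X.powerset.filter (fun Y => Y.card ≤ k) ∪ X.powersetCard (k + 1) := by
      ext Y
      simp only [Finset.mem_filter, Finset.mem_powerset, Finset.mem_union, Finset.mem_powersetCard]
      constructor
      · rintro ⟨h1, h2⟩
        rcases Nat.le_succ_iff.1 h2 with h | h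
        · exact Or.inl ⟨h1, h⟩
        · exact Or.inr ⟨h1, h⟩
      · rintro (⟨h1, h2⟩ | ⟨h1, h2⟩)
        · exact ⟨h1, by omega⟩
        · exact ⟨h1, h2.le⟩
    rw [e, Finset.prod_union, div_eq_mul_inv]
    · congr 1
      rw [Nat.cast_prod]
      refine ENNReal.prod_inv_distrib ?_
      intro Y _ Z _ _
      left
      exact_mod_cast choices_ne hN s0 hs0 Y
    · rw [Finset.disjoint_left]
      intro Y h1 h2
      rw [Finset.mem_filter] at h1
      rw [Finset.mem_powersetCard] at h2
      omega

end Final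

/-- Under the frame-wise uniform measure, almost every structure in `K^∞` is isomorphic to the
Fraïssé limit of `K`. -/
theorem statement_11 (L : FirstOrder.Language.{u, v}) [L.IsRelational]
    [∀ n, Finite (L.Relations n)] [Countable (Σ l, L.Functions l)]
    (Φ : L.Theory) (hloc : ∀ φ ∈ Φ, IsLocalSentence φ) (hGI : GITheory L ⊆ Φ)
    (K : Set (FinStruc L)) (hK : K = { A : FinStruc L | ∀ φ ∈ Φ, A.Sat φ })
    (R : Type) [L.Structure R] [Countable R] (hR : IsFraisseLimit (toBundled L K) R)
    (μ : @MeasureTheory.Measure (InfStruc L) (frameEvents L))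
    (hprob : MeasureTheory.IsProbabilityMeasure μ)
    (hconc : μ (KinfSet Φ) = 1)
    (h0 : ∀ A ∈ K, μ (Oinf A 0 ∩ KinfSet Φ) = 1)
    (hrec : ∀ A ∈ K, ∀ k : ℕ,
      μ (Oinf A (k + 1) ∩ KinfSet Φ) =
        μ (Oinf A k ∩ KinfSet Φ) / (Ncount K A k : ENNReal)) :
    μ { M : InfStruc L | Nonempty (@FirstOrder.Language.Equiv L ℕ R M.str _) } = 1 := by
  let inst := frameEvents L
  have hN := nice_AK Φ hloc hGI
  have hmK := measurable_AK Φ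
  have hma : Measurable (atoms (L := L)) := measurable_atoms
  have hz := rel_zero_empty Φ hloc K hK μ hprob h0
  let ν : MeasureTheory.Measure (Set (Atom L)) := μ.map atoms
  have hν : MeasureTheory.IsProbabilityMeasure ν :=
    MeasureTheory.Measure.isProbabilityMeasure_map hma.aemeasurable
  have hbase : ∀ X : Finset ℕ, ∀ s0 ∈ AK Φ, ν (Ev (AK Φ) X.powerset s0) =
      ∏ Y ∈ X.powerset, ((Choices (AK Φ) s0 Y).ncard : ENNReal)⁻¹ := by
    intro X s0 hs0
    have e : X.powerset.filter (fun Y => Y.card ≤ X.card) = X.powerset := by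
      rw [Finset.filter_true_of_mem]
      intro Y hY
      exact Finset.card_le_card (Finset.mem_powerset.1 hY)
    have h := base_eq Φ hloc hN K hK μ h0 hrec X s0 hs0 X.card
    rw [Oinf_eq Φ hN X s0 hs0, e] at h
    rw [← h]
    exact MeasureTheory.Measure.map_apply hma (measurable_Ev hmK _ _)
  have hae := ext_ae hN hmK ν fun X 𝒴 h1 h2 s0 hs0 =>
    measure_Ev hN hmK ν hbase X _ 𝒴 h1 h2 rfl s0 hs0
  have hae' := MeasureTheory.ae_of_ae_map hma.aemeasurable hae
  have hKm : MeasurableSet (KinfSet Φ) := hma hmK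
  have hKae : ∀ᵐ M ∂μ, M ∈ KinfSet Φ := by
    rw [MeasureTheory.ae_iff]
    exact (MeasureTheory.prob_compl_eq_zero_iff hKm).2 hconc
  have hfin : ∀ᵐ M ∂μ, M ∈ { M : InfStruc L |
      Nonempty (@FirstOrder.Language.Equiv L ℕ R M.str _) } := by
    filter_upwards [hae', hKae] with M h1 h2
    let instM : L.Structure ℕ := M.str
    exact IsFraisseLimit.nonempty_equiv (isFraisse_of_ext Φ hloc hN K hK M h2 (h1 h2)) hR
  have e : ({M : InfStruc L | Nonempty (@FirstOrder.Language.Equiv L ℕ R M.str _)} :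
      Set (InfStruc L)) =ᵐ[μ] Set.univ := Filter.eventuallyEq_univ.2 hfin
  exact (MeasureTheory.measure_congr e).trans MeasureTheory.measure_univ
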